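/- Fix real numbers β and γ. If the real numbers r₁ and r₂ are both realizable for the parameters β and γ, then the product r₁·r₂ is realizable. -/

import Mathlib

open scoped BigOperators

/-- A finite undirected multigraph (self-loops and parallel edges permitted),
with vertices `Fin n` and edges given as a multiset of (ordered representatives of)
unordered pairs of vertices.  Since the edge weight below is symmetric, the
orientation of each pair is immaterial. -/
structure MultiGraph where
  n : ℕ
  edges : Multiset (Fin n × Fin n)

/-- The edge interaction: `A₀₀ = β`, `A₀₁ = A₁₀ = 1`, `A₁₁ = γ`
(spin `false` = 0, spin `true` = 1). -/
def edgeW (β γ : ℝ) (i j : Bool) : ℝ :=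
  if i = j then (if i then γ else β) else 1

/-- `[Z_{G,v}]_i` : the partition function (no external fields) restricted to
spin configurations with `σ v = i`. -/
def Zvert (β γ : ℝ) (G : MultiGraph) (v : Fin G.n) (i : Bool) : ℝ :=
  ∑ σ : Fin G.n → Bool,
    if σ v = i then (G.edges.map fun e => edgeW β γ (σ e.1) (σ e.2)).prod else 0

/-- A real number `r` is realizable for the parameters `β, γ` if some graph `G`
and vertex `v` satisfy `[Z_{G,v}]₀ ≠ 0` and `[Z_{G,v}]₁ / [Z_{G,v}]₀ = r`. -/
def Realizable (β γ r : ℝ) : Prop :=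
  ∃ (G : MultiGraph) (v : Fin G.n),
    Zvert β γ G v false ≠ 0 ∧ Zvert β γ G v true / Zvert β γ G v false = r

/-!
Identify the roots `v₁` of `G₁` and `v₂` of `G₂`. A spin configuration of the resulting graph whose
root has spin `i` is exactly a pair of configurations of `G₁` and `G₂` whose roots have spin `i`,
and no edge joins the two parts away from the root, so the weight is the product of the two
weights. Hence `[Z]ᵢ` is multiplicative for each `i`, and so is the ratio `[Z]₁ / [Z]₀`.
-/

section SpinSystem

variable {R S V V' V₁ V₂ : Type*} [CommSemiring R] (A : S → S → R)

/-- The weight of the spin configuration `σ` on the multigraph with vertex set `V` and edges `E`,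
for an arbitrary interaction `A` between spins in `S`. As in `MultiGraph`, an edge is stored as an
ordered pair, and `A` is evaluated in that order. -/
def configWeight (E : Multiset (V × V)) (σ : V → S) : R :=
  (E.map fun e => A (σ e.1) (σ e.2)).prod

theorem configWeight_add (E F : Multiset (V × V)) (σ : V → S) :
    configWeight A (E + F) σ = configWeight A E σ * configWeight A F σ := by
  simp only [configWeight, Multiset.map_add, Multiset.prod_add]

theorem configWeight_map (f : V → V') (E : Multiset (V × V)) (σ : V' → S) :
    configWeight A (E.map (Prod.map f f)) σ = configWeight A E (σ ∘ f) := by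
  simp only [configWeight, Multiset.map_map, Function.comp_def, Prod.map_fst, Prod.map_snd]

section Wedge

variable [DecidableEq V₂]

/-- The inclusion of `V₂` into the wedge of the pointed sets `(V₁, v₁)` and `(V₂, v₂)`. The wedge is
encoded as `V₁ ⊕ {w // w ≠ v₂}`, with base point `Sum.inl v₁`; the inclusion of `V₁` is
`Sum.inl`. -/
def wedgeInr (v₁ : V₁) (v₂ w : V₂) : V₁ ⊕ {w // w ≠ v₂} :=
  if h : w = v₂ then Sum.inl v₁ else Sum.inr ⟨w, h⟩

theorem wedgeInr_self (v₁ : V₁) (v₂ : V₂) : wedgeInr v₁ v₂ v₂ = Sum.inl v₁ :=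
  dif_pos rfl

theorem wedgeInr_of_ne (v₁ : V₁) {v₂ w : V₂} (h : w ≠ v₂) :
    wedgeInr v₁ v₂ w = Sum.inr ⟨w, h⟩ :=
  dif_neg h

theorem elim_comp_wedgeInr {v₁ : V₁} {v₂ : V₂} {σ₁ : V₁ → S} {σ₂ : V₂ → S} (h : σ₁ v₁ = σ₂ v₂) :
    Sum.elim σ₁ (fun w : {w // w ≠ v₂} => σ₂ w) ∘ wedgeInr v₁ v₂ = σ₂ := by
  funext w
  by_cases hw : w = v₂
  · subst hw
    simpa only [Function.comp_apply, wedgeInr_self, Sum.elim_inl] using h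
  · simp only [Function.comp_apply, wedgeInr_of_ne v₁ hw, Sum.elim_inr]

theorem elim_comp_inl_comp_wedgeInr (v₁ : V₁) (v₂ : V₂) (σ : V₁ ⊕ {w // w ≠ v₂} → S) :
    Sum.elim (σ ∘ Sum.inl) (fun w : {w // w ≠ v₂} => (σ ∘ wedgeInr v₁ v₂) w) = σ := by
  funext x
  rcases x with x | w
  · rfl
  · simp only [Sum.elim_inr, Function.comp_apply, wedgeInr_of_ne v₁ w.2]

/-- The edges of the wedge of the multigraphs `(V₁, E₁)` and `(V₂, E₂)`, obtained by identifying the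
vertices `v₁` and `v₂`. -/
def wedgeEdges (E₁ : Multiset (V₁ × V₁)) (E₂ : Multiset (V₂ × V₂)) (v₁ : V₁) (v₂ : V₂) :
    Multiset ((V₁ ⊕ {w // w ≠ v₂}) × (V₁ ⊕ {w // w ≠ v₂})) :=
  E₁.map (Prod.map Sum.inl Sum.inl) + E₂.map (Prod.map (wedgeInr v₁ v₂) (wedgeInr v₁ v₂))

theorem configWeight_wedgeEdges (E₁ : Multiset (V₁ × V₁)) (E₂ : Multiset (V₂ × V₂)) (v₁ : V₁)
    (v₂ : V₂) (σ : V₁ ⊕ {w // w ≠ v₂} → S) :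
    configWeight A (wedgeEdges E₁ E₂ v₁ v₂) σ =
      configWeight A E₁ (σ ∘ Sum.inl) * configWeight A E₂ (σ ∘ wedgeInr v₁ v₂) := by
  rw [wedgeEdges, configWeight_add, configWeight_map, configWeight_map]

end Wedge

variable [Fintype S] [DecidableEq S] [Fintype V] [DecidableEq V] [Fintype V'] [DecidableEq V']
  [Fintype V₁] [DecidableEq V₁] [Fintype V₂] [DecidableEq V₂]

/-- The partition function restricted to the configurations in which the root `v` has spin `i`: the
analogue of `Zvert` for an arbitrary finite vertex set, finite spin set and interaction. -/
def rootedPartition (E : Multiset (V × V)) (v : V) (i : S) : R :=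
  ∑ σ : V → S with σ v = i, configWeight A E σ

theorem rootedPartition_map_equiv (f : V ≃ V') (E : Multiset (V × V)) (v : V) (i : S) :
    rootedPartition A (E.map (Prod.map f f)) (f v) i = rootedPartition A E v i := by
  refine Finset.sum_equiv (f.arrowCongr (Equiv.refl S)).symm (fun σ => ?_) fun σ _ => ?_
  · simp
  · exact configWeight_map A f E σ

theorem rootedPartition_wedgeEdges (E₁ : Multiset (V₁ × V₁)) (E₂ : Multiset (V₂ × V₂)) (v₁ : V₁)
    (v₂ : V₂) (i : S) :
    rootedPartition A (wedgeEdges E₁ E₂ v₁ v₂) (Sum.inl v₁) i =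
      rootedPartition A E₁ v₁ i * rootedPartition A E₂ v₂ i := by
  simp only [rootedPartition, Finset.sum_mul_sum, ← Finset.sum_product']
  refine Finset.sum_nbij' (fun σ => (σ ∘ Sum.inl, σ ∘ wedgeInr v₁ v₂))
    (fun p => Sum.elim p.1 fun w => p.2 w) ?_ ?_ ?_ ?_ ?_
  · intro σ hσ
    simpa [wedgeInr_self] using hσ
  · intro p hp
    simpa using (Finset.mem_product.mp hp).1
  · intro σ _
    exact elim_comp_inl_comp_wedgeInr v₁ v₂ σ
  · rintro ⟨σ₁, σ₂⟩ hp
    have hroot : σ₁ v₁ = i ∧ σ₂ v₂ = i := by simpa using hp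
    exact Prod.ext rfl (elim_comp_wedgeInr (hroot.1.trans hroot.2.symm))
  · intro σ _
    exact configWeight_wedgeEdges A E₁ E₂ v₁ v₂ σ

end SpinSystem

theorem Zvert_eq_rootedPartition (β γ : ℝ) (G : MultiGraph) (v : Fin G.n) (i : Bool) :
    Zvert β γ G v i = rootedPartition (edgeW β γ) G.edges v i :=
  (Finset.sum_filter _ _).symm

theorem exists_Zvert_eq_rootedPartition {V : Type*} [Fintype V] [DecidableEq V] (β γ : ℝ)
    (E : Multiset (V × V)) (v : V) :
    ∃ (G : MultiGraph) (w : Fin G.n), ∀ i,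
      Zvert β γ G w i = rootedPartition (edgeW β γ) E v i := by
  let f := Fintype.equivFin V
  refine ⟨⟨Fintype.card V, E.map (Prod.map f f)⟩, f v, fun i => ?_⟩
  rw [Zvert_eq_rootedPartition]
  exact rootedPartition_map_equiv (edgeW β γ) f E v i

theorem exists_Zvert_eq_mul (β γ : ℝ) (G₁ G₂ : MultiGraph) (v₁ : Fin G₁.n) (v₂ : Fin G₂.n) :
    ∃ (G : MultiGraph) (v : Fin G.n), ∀ i,
      Zvert β γ G v i = Zvert β γ G₁ v₁ i * Zvert β γ G₂ v₂ i := by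
  obtain ⟨G, v, hG⟩ := exists_Zvert_eq_rootedPartition β γ
    (wedgeEdges G₁.edges G₂.edges v₁ v₂) (Sum.inl v₁)
  refine ⟨G, v, fun i => ?_⟩
  rw [hG, rootedPartition_wedgeEdges, Zvert_eq_rootedPartition, Zvert_eq_rootedPartition]

/-- If `r₁` and `r₂` are realizable then so is `r₁ · r₂`. -/
theorem stmt10 (β γ r₁ r₂ : ℝ) (h1 : Realizable β γ r₁) (h2 : Realizable β γ r₂) :
    Realizable β γ (r₁ * r₂) := by
  obtain ⟨G₁, v₁, hne₁, rfl⟩ := h1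
  obtain ⟨G₂, v₂, hne₂, rfl⟩ := h2
  obtain ⟨G, v, hmul⟩ := exists_Zvert_eq_mul β γ G₁ G₂ v₁ v₂
  refine ⟨G, v, ?_, ?_⟩
  · rw [hmul]
    exact mul_ne_zero hne₁ hne₂
  · rw [hmul, hmul, div_mul_div_comm]
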